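/- Fix θ ∈ ℝ^d with θ ≠ 0 and δ ∈ ℝ^d with strictly positive coordinates. Then the hyperbolic entropy satisfies lim_{s→0⁺} ψ_{sδ}(θ) / ( (1/2) Σ_{i=1}^d |θ_i| · ln(1/(sδ_i)) ) = 1; that is, as the scale Δ = sδ tends to 0, ψ_Δ(θ) is asymptotically equivalent to a logarithmically weighted ℓ¹-norm of θ. -/

import Mathlib

open Real Filter Topology

/-- Hyperbolic entropy at scale `Δ` (with strictly positive coordinates). -/
noncomputable def hypEntropy {d : ℕ} (Δ : Fin d → ℝ) (θ : EuclideanSpace ℝ (Fin d)) : ℝ :=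
  (1 / 4) * ∑ i, (2 * θ i * Real.arsinh (2 * θ i / Δ i) -
    Real.sqrt (4 * θ i ^ 2 + Δ i ^ 2) + Δ i)

/-!
Since `arsinh (x / D) = log (x + √(x ^ 2 + D ^ 2)) + log (1 / D)` and `x * arsinh (x / D)` is even
in `x`, the `i`-th summand of `4 ψ_Δ(θ)` is `2 |θ i| * log (1 / Δ i)` plus a function of `Δ i` that
extends continuously to `Δ i = 0`. As `Δ → 0`, the sum of the logarithmic terms tends to
infinity because `θ ≠ 0`, while the sum of the remainders converges, so the quotient tends to `1`.
-/

theorem arsinh_div_eq_log_add_log (x : ℝ) {D : ℝ} (hD : 0 < D) :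
    arsinh (x / D) = log (x + √(x ^ 2 + D ^ 2)) + log (1 / D) := by
  have sqrt_eq : √(1 + (x / D) ^ 2) = √(x ^ 2 + D ^ 2) / D := by
    have radicand_eq : 1 + (x / D) ^ 2 = (x ^ 2 + D ^ 2) / D ^ 2 := by
      field_simp
      ring
    rw [radicand_eq, sqrt_div' _ (sq_nonneg D), sqrt_sq hD.le]
  have add_sqrt_pos : 0 < x + √(x ^ 2 + D ^ 2) := by
    have abs_lt_sqrt : |x| < √(x ^ 2 + D ^ 2) :=
      lt_sqrt_of_sq_lt (by rw [sq_abs]; exact lt_add_of_pos_right _ (pow_pos hD 2))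
    linarith [neg_abs_le x]
  rw [arsinh, sqrt_eq, ← add_div, div_eq_mul_one_div, log_mul add_sqrt_pos.ne' (by positivity)]

theorem mul_arsinh_div_eq_abs (x D : ℝ) : x * arsinh (x / D) = |x| * arsinh (|x| / D) := by
  rcases abs_choice x with h | h <;> simp only [h, neg_div, arsinh_neg, neg_mul_neg]

/-- The part of the hyperbolic entropy that stays bounded at small scales: the coordinate
`θ i` contributes `hypEntropyRemainder (2 * θ i) (Δ i)` to `4 ψ_Δ(θ)`, besides its logarithmic
term. At `x = 0` the value `log 0 = 0` is harmless because of the factor `|x|`. -/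
noncomputable def hypEntropyRemainder (x D : ℝ) : ℝ :=
  |x| * log (|x| + √(x ^ 2 + D ^ 2)) - √(x ^ 2 + D ^ 2) + D

theorem mul_arsinh_div_sub_sqrt_add (x : ℝ) {D : ℝ} (hD : 0 < D) :
    x * arsinh (x / D) - √(x ^ 2 + D ^ 2) + D =
      |x| * log (1 / D) + hypEntropyRemainder x D := by
  rw [mul_arsinh_div_eq_abs, arsinh_div_eq_log_add_log |x| hD, sq_abs, hypEntropyRemainder]
  ring

theorem continuous_hypEntropyRemainder (x : ℝ) : Continuous (hypEntropyRemainder x) := by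
  unfold hypEntropyRemainder
  rcases eq_or_ne x 0 with rfl | hx
  · simp only [abs_zero, zero_mul]
    fun_prop
  · have continuous_log : Continuous fun D : ℝ => log (|x| + √(x ^ 2 + D ^ 2)) :=
      Continuous.log (by fun_prop) fun D => by positivity
    fun_prop

theorem hypEntropy_eq_log_sum_add_remainder {d : ℕ} (θ : EuclideanSpace ℝ (Fin d))
    {Δ : Fin d → ℝ} (hΔ : ∀ i, 0 < Δ i) :
    hypEntropy Δ θ = (1 / 2) * ∑ i, |θ i| * log (1 / Δ i) +
      (1 / 4) * ∑ i, hypEntropyRemainder (2 * θ i) (Δ i) := by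
  have summand_eq (i : Fin d) :
      2 * θ i * arsinh (2 * θ i / Δ i) - √(4 * θ i ^ 2 + Δ i ^ 2) + Δ i =
        2 * (|θ i| * log (1 / Δ i)) + hypEntropyRemainder (2 * θ i) (Δ i) := by
    have h := mul_arsinh_div_sub_sqrt_add (2 * θ i) (hΔ i)
    rwa [mul_pow, abs_mul, abs_two, mul_assoc 2 |θ i|, show (2 : ℝ) ^ 2 = 4 by norm_num] at h
  simp only [hypEntropy, summand_eq, Finset.sum_add_distrib, ← Finset.mul_sum]
  ring

section PositiveOrthant

variable {ι : Type*}

theorem tendsto_apply_nhdsWithin_pos (i : ι) :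
    Tendsto (fun Δ : ι → ℝ => Δ i) (𝓝[{Δ | ∀ i, 0 < Δ i}] 0) (𝓝[>] 0) :=
  (continuous_apply i).continuousWithinAt.tendsto_nhdsWithin fun _ hΔ => hΔ i

theorem tendsto_mul_const_nhdsWithin_pos {δ : ι → ℝ} (hδ : ∀ i, 0 < δ i) :
    Tendsto (fun (s : ℝ) i => s * δ i) (𝓝[>] 0) (𝓝[{Δ | ∀ i, 0 < Δ i}] 0) := by
  refine tendsto_nhdsWithin_iff.mpr ⟨?_, ?_⟩
  · refine (Continuous.tendsto' ?_ 0 0 ?_).mono_left nhdsWithin_le_nhds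
    · fun_prop
    · ext i
      exact zero_mul (δ i)
  · filter_upwards [self_mem_nhdsWithin] with s hs i using mul_pos hs (hδ i)

theorem tendsto_log_one_div_nhdsGT_zero :
    Tendsto (fun D : ℝ => log (1 / D)) (𝓝[>] 0) atTop := by
  simpa only [one_div, Function.comp_def] using tendsto_log_atTop.comp tendsto_inv_nhdsGT_zero

theorem tendsto_sum_mul_log_one_div_atTop [Fintype ι] {a : ι → ℝ} (ha : 0 < a) :
    Tendsto (fun Δ : ι → ℝ => ∑ i, a i * log (1 / Δ i)) (𝓝[{Δ | ∀ i, 0 < Δ i}] 0) atTop := by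
  obtain ⟨a_nonneg, j, a_j_pos⟩ := Pi.lt_def.mp ha
  have tendsto_log (i : ι) :
      Tendsto (fun Δ : ι → ℝ => log (1 / Δ i)) (𝓝[{Δ | ∀ i, 0 < Δ i}] 0) atTop :=
    tendsto_log_one_div_nhdsGT_zero.comp (tendsto_apply_nhdsWithin_pos i)
  refine tendsto_atTop_mono' _ ?_ ((tendsto_log j).const_mul_atTop a_j_pos)
  filter_upwards [eventually_all.mpr fun i => (tendsto_log i).eventually_ge_atTop 0]
    with Δ log_nonneg
  exact Finset.single_le_sum (f := fun i => a i * log (1 / Δ i))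
    (fun i _ => mul_nonneg (a_nonneg i) (log_nonneg i)) (Finset.mem_univ j)

end PositiveOrthant

theorem stmt_13_general {d : ℕ} (θ : EuclideanSpace ℝ (Fin d)) (hθ : θ ≠ 0) :
    Tendsto (fun Δ => hypEntropy Δ θ / ((1 / 2) * ∑ i, |θ i| * log (1 / Δ i)))
      (𝓝[{Δ | ∀ i, 0 < Δ i}] 0) (𝓝 1) := by
  have weights_pos : 0 < fun i => |θ i| :=
    lt_of_le_of_ne (fun i => abs_nonneg (θ i)) fun h =>
      hθ (PiLp.ext fun i => abs_eq_zero.mp (congrFun h i).symm)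
  have log_sum_atTop := (tendsto_sum_mul_log_one_div_atTop weights_pos).const_mul_atTop
    (one_half_pos (α := ℝ))
  have remainder_tendsto :
      Tendsto (fun Δ : Fin d → ℝ => (1 / 4) * ∑ i, hypEntropyRemainder (2 * θ i) (Δ i))
        (𝓝[{Δ | ∀ i, 0 < Δ i}] 0) (𝓝 ((1 / 4) * ∑ i, hypEntropyRemainder (2 * θ i) 0)) := by
    refine (Continuous.tendsto' ?_ 0 _ rfl).mono_left nhdsWithin_le_nhds
    exact continuous_const.mul <| continuous_finsetSum _ fun i _ =>
      (continuous_hypEntropyRemainder _).comp (continuous_apply i)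
  have quotient_tendsto := (remainder_tendsto.div_atTop log_sum_atTop).const_add 1
  rw [add_zero] at quotient_tendsto
  refine quotient_tendsto.congr' ?_
  filter_upwards [self_mem_nhdsWithin, log_sum_atTop.eventually_ne_atTop 0] with Δ hΔ log_sum_ne
  rw [hypEntropy_eq_log_sum_add_remainder θ hΔ, add_div, div_self log_sum_ne]

/-- **ℓ¹ asymptotics of the hyperbolic entropy.** For `θ ≠ 0` and `δ` with
strictly positive coordinates, `ψ_{sδ}(θ) / (½ ∑_i |θ_i| ln(1/(sδ_i))) → 1` as `s → 0⁺`. -/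
theorem stmt_13 {d : ℕ} (θ : EuclideanSpace ℝ (Fin d)) (hθ : θ ≠ 0)
    (δ : Fin d → ℝ) (hδ : ∀ i, 0 < δ i) :
    Tendsto
      (fun s : ℝ =>
        hypEntropy (fun i => s * δ i) θ /
          ((1 / 2) * ∑ i, |θ i| * Real.log (1 / (s * δ i))))
      (𝓝[>] (0 : ℝ)) (𝓝 1) :=
  (stmt_13_general θ hθ).comp (tendsto_mul_const_nhdsWithin_pos hδ)
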